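/- Fix θ ∈ S^{d−1}. The lifted cost LS_θ on P_2(ℝ^d) is non-negative, symmetric, satisfies the triangle inequality LS_θ(μ1, μ3) ≤ LS_θ(μ1, μ2) + LS_θ(μ2, μ3) for all μ1, μ2, μ3 ∈ P_2(ℝ^d), satisfies LS_θ(μ1, μ2) ≥ W_2(μ1, μ2), and if LS_θ(μ1, μ2) = 0 then μ1 = μ2. -/

import Mathlib

open MeasureTheory Filter Topology ProbabilityTheory
open scoped ENNReal RealInnerProductSpace Classical

noncomputable section

/-- Euclidean space ℝ^d. -/
abbrev Euc (d : ℕ) : Type := EuclideanSpace ℝ (Fin d)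

/-- `P2` : Borel probability measures with finite second moment. -/
def P2 {E : Type*} [NormedAddCommGroup E] [MeasurableSpace E] : Set (Measure E) :=
  {μ | IsProbabilityMeasure μ ∧ Integrable (fun x => ‖x‖ ^ 2) μ}

/-- Couplings between two measures. -/
def Coupling {E F : Type*} [MeasurableSpace E] [MeasurableSpace F]
    (μ : Measure E) (ν : Measure F) : Set (Measure (E × F)) :=
  {π | IsProbabilityMeasure π ∧ π.map Prod.fst = μ ∧ π.map Prod.snd = ν}

/-- Quadratic transport cost of a plan. -/
def tCost {E : Type*} [NormedAddCommGroup E] [MeasurableSpace E]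
    (π : Measure (E × E)) : ℝ :=
  ∫ p, ‖p.1 - p.2‖ ^ 2 ∂π

/-- Squared 2-Wasserstein distance. -/
def W2sq {E : Type*} [NormedAddCommGroup E] [MeasurableSpace E] (μ ν : Measure E) : ℝ :=
  sInf (tCost '' Coupling μ ν)

/-- 2-Wasserstein distance. -/
def W2 {E : Type*} [NormedAddCommGroup E] [MeasurableSpace E] (μ ν : Measure E) : ℝ :=
  Real.sqrt (W2sq μ ν)

/-- Optimal transport plans for the quadratic cost. -/
def OptPlan {E : Type*} [NormedAddCommGroup E] [MeasurableSpace E]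
    (μ ν : Measure E) : Set (Measure (E × E)) :=
  {π | π ∈ Coupling μ ν ∧ tCost π = W2sq μ ν}

/-- `Gamma ν μ1 μ2` : probability measures on `E × E × E` whose (1,2)-marginal is an optimal
plan between `ν` and `μ1` and whose (1,3)-marginal is an optimal plan between `ν` and `μ2`. -/
def Gamma {E : Type*} [NormedAddCommGroup E] [MeasurableSpace E]
    (ν μ1 μ2 : Measure E) : Set (Measure (E × E × E)) :=
  {ρ | IsProbabilityMeasure ρ ∧
    ρ.map (fun p => (p.1, p.2.1)) ∈ OptPlan ν μ1 ∧
    ρ.map (fun p => (p.1, p.2.2)) ∈ OptPlan ν μ2}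

/-- Cost `∫ ‖x1 − x2‖² dρ(y, x1, x2)` of a 3-plan. -/
def pivotCost {E : Type*} [NormedAddCommGroup E] [MeasurableSpace E]
    (ρ : Measure (E × E × E)) : ℝ :=
  ∫ p, ‖p.2.1 - p.2.2‖ ^ 2 ∂ρ

/-- Squared ν-based Wasserstein discrepancy. -/
def Wnusq {E : Type*} [NormedAddCommGroup E] [MeasurableSpace E]
    (ν μ1 μ2 : Measure E) : ℝ :=
  sInf (pivotCost '' Gamma ν μ1 μ2)

/-- ν-based Wasserstein discrepancy. -/
def Wnu {E : Type*} [NormedAddCommGroup E] [MeasurableSpace E]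
    (ν μ1 μ2 : Measure E) : ℝ :=
  Real.sqrt (Wnusq ν μ1 μ2)

/-- Weak convergence of a sequence of measures (against bounded continuous functions). -/
def WeakConv {E : Type*} [MeasurableSpace E] [TopologicalSpace E]
    (μs : ℕ → Measure E) (μ : Measure E) : Prop :=
  ∀ f : BoundedContinuousFunction E ℝ,
    Tendsto (fun n => ∫ x, f x ∂(μs n)) atTop (𝓝 (∫ x, f x ∂μ))

/-- Quantile function (pseudo-inverse c.d.f.) of a measure on ℝ. -/
def quantile (ν : Measure ℝ) (t : ℝ) : ℝ :=
  sInf {s : ℝ | ENNReal.ofReal t ≤ ν (Set.Iic s)}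

/-- Pushforward of `μ` by the projection `P_θ : x ↦ ⟪θ, x⟫`. -/
def projLine {d : ℕ} (θ : Euc d) (μ : Measure (Euc d)) : Measure ℝ :=
  μ.map (fun x => ⟪θ, x⟫)

/-- `μ_θ[μ1, μ2]` : the (unique) Wasserstein mean of `Q_θ#μ1` and `Q_θ#μ2`, given by the
explicit quantile formula `[(½ F_{ν1}^{[-1]} + ½ F_{ν2}^{[-1]})·θ]#L_{[0,1]}`. -/
def pivotMiddle {d : ℕ} (θ : Euc d) (μ1 μ2 : Measure (Euc d)) : Measure (Euc d) :=
  (volume.restrict (Set.Icc (0 : ℝ) 1)).map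
    (fun t => ((1 / 2) * quantile (projLine θ μ1) t
      + (1 / 2) * quantile (projLine θ μ2) t) • θ)

/-- Squared Pivot Sliced discrepancy. -/
def PSsq {d : ℕ} (θ : Euc d) (μ1 μ2 : Measure (Euc d)) : ℝ :=
  Wnusq (pivotMiddle θ μ1 μ2) μ1 μ2

/-- Pivot Sliced discrepancy. -/
def PS {d : ℕ} (θ : Euc d) (μ1 μ2 : Measure (Euc d)) : ℝ :=
  Real.sqrt (PSsq θ μ1 μ2)

/-- `π_θ[μ1, μ2]` : the unique optimal 1D plan between `P_θ#μ1` and `P_θ#μ2`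
(co-monotone quantile coupling). -/
def piTheta {d : ℕ} (θ : Euc d) (μ1 μ2 : Measure (Euc d)) : Measure (ℝ × ℝ) :=
  (volume.restrict (Set.Icc (0 : ℝ) 1)).map
    (fun t => (quantile (projLine θ μ1) t, quantile (projLine θ μ2) t))

/-- `Ω_θ(μ1, μ2)` : couplings of `μ1, μ2` whose projection by `(P_θ, P_θ)` is `π_θ[μ1, μ2]`. -/
def OmegaTheta {d : ℕ} (θ : Euc d) (μ1 μ2 : Measure (Euc d)) :
    Set (Measure (Euc d × Euc d)) :=
  {ω | ω ∈ Coupling μ1 μ2 ∧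
    ω.map (fun p => (⟪θ, p.1⟫, ⟪θ, p.2⟫)) = piTheta θ μ1 μ2}

/-- Squared constrained Wasserstein discrepancy `CW_θ²`. -/
def CWsq {d : ℕ} (θ : Euc d) (μ1 μ2 : Measure (Euc d)) : ℝ :=
  sInf (tCost '' OmegaTheta θ μ1 μ2)

/-- Wasserstein means: minimisers of `μ ↦ W₂²(μ1, μ) + W₂²(μ, μ2)` over `P2`. -/
def WMean {d : ℕ} (μ1 μ2 : Measure (Euc d)) : Set (Measure (Euc d)) :=
  {μ | μ ∈ (P2 : Set (Measure (Euc d))) ∧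
    ∀ μ' ∈ (P2 : Set (Measure (Euc d))),
      W2sq μ1 μ + W2sq μ μ2 ≤ W2sq μ1 μ' + W2sq μ' μ2}

/-- Uniform empirical measure `1/n ∑ δ_{x_i}`. -/
def empMeasure {d n : ℕ} (x : Fin n → Euc d) : Measure (Euc d) :=
  (n : ℝ≥0∞)⁻¹ • ∑ i, Measure.dirac (x i)

/-- The pushforward of `μ` by `x ↦ (⟪θ, x⟫, x)`, used to disintegrate `μ` along `P_θ`. -/
def slicePair {d : ℕ} (θ : Euc d) (μ : Measure (Euc d)) : Measure (ℝ × Euc d) :=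
  μ.map (fun x => ((⟪θ, x⟫ : ℝ), x))

/-- The lifted plan `γ_θ[μ1, μ2]`: the 1D optimal plan `π_θ[μ1, μ2]` on the projections,
with the conditional measures of `μ1` and `μ2` on the slices coupled independently. -/
def liftedPlan {d : ℕ} (θ : Euc d) (μ1 μ2 : Measure (Euc d))
    [IsFiniteMeasure μ1] [IsFiniteMeasure μ2] : Measure (Euc d × Euc d) :=
  haveI : IsFiniteMeasure (slicePair θ μ1) := Measure.isFiniteMeasure_map μ1 _
  haveI : IsFiniteMeasure (slicePair θ μ2) := Measure.isFiniteMeasure_map μ2 _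
  (piTheta θ μ1 μ2).bind fun st =>
    ((slicePair θ μ1).condKernel st.1).prod ((slicePair θ μ2).condKernel st.2)

/-- Squared lifted cost `LS_θ²`. -/
def LSsq {d : ℕ} (θ : Euc d) (μ1 μ2 : Measure (Euc d))
    [IsFiniteMeasure μ1] [IsFiniteMeasure μ2] : ℝ :=
  ∫ p, ‖p.1 - p.2‖ ^ 2 ∂(liftedPlan θ μ1 μ2)

/-- Lifted cost `LS_θ`. -/
def LS {d : ℕ} (θ : Euc d) (μ1 μ2 : Measure (Euc d))
    [IsFiniteMeasure μ1] [IsFiniteMeasure μ2] : ℝ :=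
  Real.sqrt (LSsq θ μ1 μ2)

/-
Let `κᵢ` be the disintegration of `μᵢ` along `P_θ`, reparametrised by the quantile function of
`P_θ#μᵢ`, so that mixing `κᵢ` over the uniform law on `[0, 1]` gives back `μᵢ`. Then
`γ_θ[μᵢ, μⱼ]` is the mixture of `κᵢ t ⊗ κⱼ t` over uniform `t`, i.e. the joint law of two variables
that are independent given `t`. The mixture of `κ₁ t ⊗ κ₂ t ⊗ κ₃ t` is thus a single law whose
pairwise marginals are the three lifted plans, and the triangle inequality is Minkowski's
inequality in `L²` of that law.
-/

section Quantile

variable (ν : Measure ℝ) {t : ℝ}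

lemma nonempty_setOf_le_cdf (ht : t < 1) : {s | t ≤ cdf ν s}.Nonempty :=
  let ⟨s, hs⟩ := ((tendsto_cdf_atTop ν).eventually_const_lt ht).exists
  ⟨s, hs.le⟩

lemma bddBelow_setOf_le_cdf (ht : 0 < t) : BddBelow {s | t ≤ cdf ν s} := by
  obtain ⟨a, ha⟩ := ((tendsto_cdf_atBot ν).eventually_lt_const ht).exists
  exact ⟨a, fun s hs => ((monotone_cdf ν).reflect_lt (ha.trans_le hs)).le⟩

variable [IsProbabilityMeasure ν]

lemma quantile_eq_sInf_le_cdf (t : ℝ) : quantile ν t = sInf {s | t ≤ cdf ν s} := by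
  simp only [quantile, ← ofReal_cdf ν, ENNReal.ofReal_le_ofReal_iff (cdf_nonneg ν _)]

lemma quantile_le_iff (ht : t ∈ Set.Ioo (0 : ℝ) 1) (s : ℝ) :
    quantile ν t ≤ s ↔ t ≤ cdf ν s := by
  rw [quantile_eq_sInf_le_cdf]
  refine ⟨fun h => ?_, fun h => csInf_le (bddBelow_setOf_le_cdf ν ht.1) h⟩
  have hright : Tendsto (cdf ν) (𝓝[>] s) (𝓝 (cdf ν s)) :=
    ((cdf ν).right_continuous s).mono_left (nhdsWithin_mono _ Set.Ioi_subset_Ici_self)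
  refine ge_of_tendsto hright ?_
  filter_upwards [self_mem_nhdsWithin] with s' hs'
  obtain ⟨a, ha, has'⟩ :=
    exists_lt_of_csInf_lt (nonempty_setOf_le_cdf ν ht.2) (h.trans_lt hs')
  exact ha.trans (monotone_cdf ν has'.le)

lemma monotoneOn_quantile : MonotoneOn (quantile ν) (Set.Ioo 0 1) := fun _ ha _ hb hab =>
  (quantile_le_iff ν ha _).2 (hab.trans ((quantile_le_iff ν hb _).1 le_rfl))

lemma quantile_eq_zero_of_nonpos (ht : t ≤ 0) : quantile ν t = 0 := by
  have huniv : {s | t ≤ cdf ν s} = Set.univ :=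
    Set.eq_univ_of_forall fun s => ht.trans (cdf_nonneg ν s)
  rw [quantile_eq_sInf_le_cdf, huniv, Real.sInf_univ]

lemma quantile_eq_zero_of_one_lt (ht : 1 < t) : quantile ν t = 0 := by
  have hempty : {s | t ≤ cdf ν s} = ∅ :=
    Set.eq_empty_of_forall_notMem fun s hs => (ht.trans_le hs).not_ge (cdf_le_one ν s)
  rw [quantile_eq_sInf_le_cdf, hempty, Real.sInf_empty]

@[fun_prop]
lemma measurable_quantile : Measurable (quantile ν) := by
  refine measurable_of_restrict_of_restrict_compl measurableSet_Ioo
    (monotoneOn_quantile ν).monotone.measurable ?_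
  -- Outside `(0, 1)` the infimum takes the junk value `0`, except possibly at `1`.
  refine (measurable_const (a := (0 : ℝ))).measurable_of_countable_ne ?_
  refine Set.Subsingleton.countable fun a ha b hb => ?_
  have eq_one : ∀ c : ((Set.Ioo (0 : ℝ) 1)ᶜ : Set ℝ), 0 ≠ quantile ν c → (c : ℝ) = 1 := by
    intro c hc
    have hpos : 0 < (c : ℝ) := not_le.1 fun h => hc (quantile_eq_zero_of_nonpos ν h).symm
    have hle : (c : ℝ) ≤ 1 := not_lt.1 fun h => hc (quantile_eq_zero_of_one_lt ν h).symm
    exact hle.eq_of_not_lt fun h => c.2 ⟨hpos, h⟩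
  exact Subtype.ext ((eq_one a ha).trans (eq_one b hb).symm)

/-- The uniform law on `[0, 1]`, over which quantile functions are parametrised. -/
abbrev uniformUnit : Measure ℝ := volume.restrict (Set.Icc 0 1)

instance isProbabilityMeasure_uniformUnit : IsProbabilityMeasure uniformUnit := ⟨by simp⟩

lemma ae_mem_Ioo_uniformUnit : ∀ᵐ t ∂uniformUnit, t ∈ Set.Ioo (0 : ℝ) 1 := by
  rw [uniformUnit, Measure.restrict_congr_set Ioo_ae_eq_Icc.symm]
  exact ae_restrict_mem measurableSet_Ioo

lemma uniformUnit_Iic {c : ℝ} (hc : c ≤ 1) : uniformUnit (Set.Iic c) = ENNReal.ofReal c := by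
  rw [Measure.restrict_apply measurableSet_Iic, Set.inter_comm, ← Set.Ici_inter_Iic,
    Set.inter_assoc, Set.Iic_inter_Iic, min_eq_right hc, Set.Ici_inter_Iic, Real.volume_Icc,
    sub_zero]

lemma map_quantile_uniformUnit : uniformUnit.map (quantile ν) = ν := by
  have : IsProbabilityMeasure (uniformUnit.map (quantile ν)) :=
    Measure.isProbabilityMeasure_map (by fun_prop)
  refine Measure.ext_of_Iic _ _ fun s => ?_
  have hpreimage : quantile ν ⁻¹' Set.Iic s =ᵐ[uniformUnit] Set.Iic (cdf ν s) := by
    filter_upwards [ae_mem_Ioo_uniformUnit] with t ht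
    exact propext (quantile_le_iff ν ht s)
  rw [Measure.map_apply (measurable_quantile ν) measurableSet_Iic, measure_congr hpreimage,
    uniformUnit_Iic (cdf_le_one ν s), ofReal_cdf]

end Quantile

section TransportCost

variable {E Ω : Type*} [NormedAddCommGroup E] [MeasurableSpace E] {μ ν : Measure E}
  {π : Measure (E × E)} {mΩ : MeasurableSpace Ω} {P : Measure Ω} {X Y Z : Ω → E}

lemma tCost_map_swap (π : Measure (E × E)) : tCost (π.map Prod.swap) = tCost π := by
  calc tCost (π.map Prod.swap)
      = ∫ p, ‖p.2 - p.1‖ ^ 2 ∂π := integral_map_equiv MeasurableEquiv.prodComm _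
    _ = tCost π := by simp only [tCost, norm_sub_rev]

lemma W2_le_sqrt_tCost (hπ : π ∈ Coupling μ ν) : W2 μ ν ≤ √(tCost π) := by
  have hbdd : BddBelow (tCost '' Coupling μ ν) := by
    refine ⟨0, ?_⟩
    rintro _ ⟨π', -, rfl⟩
    exact integral_nonneg fun p => sq_nonneg _
  exact Real.sqrt_le_sqrt (csInf_le hbdd ⟨π, hπ, rfl⟩)

variable [BorelSpace E] [SecondCountableTopology E]

lemma memLp_two_of_map_mem_P2 (hX : AEMeasurable X P) (h : P.map X ∈ (P2 : Set (Measure E))) :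
    MemLp X 2 P :=
  (memLp_map_measure_iff aestronglyMeasurable_id hX).1
    ((memLp_two_iff_integrable_sq_norm aestronglyMeasurable_id).2 h.2)

lemma sqrt_tCost_map_prodMk (hX : AEMeasurable X P) (hY : AEMeasurable Y P) :
    √(tCost (P.map fun ω => (X ω, Y ω))) = lpNorm (X - Y) 2 P := by
  rw [tCost, integral_map (hX.prodMk hY) (by fun_prop),
    lpNorm_eq_integral_norm_rpow_toReal two_ne_zero ENNReal.ofNat_ne_top
      (hX.sub hY).aestronglyMeasurable, Real.sqrt_eq_rpow]
  norm_num

lemma sqrt_tCost_eq_lpNorm (π : Measure (E × E)) :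
    √(tCost π) = lpNorm (Prod.fst - Prod.snd) 2 π := by
  simpa only [Prod.mk.eta, Measure.map_id'] using
    sqrt_tCost_map_prodMk (P := π) measurable_fst.aemeasurable measurable_snd.aemeasurable

lemma sqrt_tCost_map_prodMk_triangle (hX : MemLp X 2 P) (hY : MemLp Y 2 P)
    (hZ : AEMeasurable Z P) :
    √(tCost (P.map fun ω => (X ω, Z ω))) ≤
      √(tCost (P.map fun ω => (X ω, Y ω))) + √(tCost (P.map fun ω => (Y ω, Z ω))) := by
  have hX' := hX.aestronglyMeasurable.aemeasurable
  have hY' := hY.aestronglyMeasurable.aemeasurable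
  rw [sqrt_tCost_map_prodMk hX' hZ, sqrt_tCost_map_prodMk hX' hY', sqrt_tCost_map_prodMk hY' hZ]
  exact lpNorm_sub_le_lpNorm_sub_add_lpNorm_sub hX hY one_le_two

lemma eq_of_sqrt_tCost_eq_zero (hμ : μ ∈ (P2 : Set (Measure E)))
    (hν : ν ∈ (P2 : Set (Measure E))) (hπ : π ∈ Coupling μ ν) (h : √(tCost π) = 0) : μ = ν := by
  obtain ⟨-, rfl, rfl⟩ := hπ
  have hfst := memLp_two_of_map_mem_P2 measurable_fst.aemeasurable hμ
  have hsnd := memLp_two_of_map_mem_P2 measurable_snd.aemeasurable hν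
  rw [sqrt_tCost_eq_lpNorm, lpNorm_eq_zero (hfst.sub hsnd) two_ne_zero] at h
  exact Measure.map_congr (h.mono fun p hp => sub_eq_zero.1 hp)

end TransportCost

section KernelMixture

variable {Ω Ω' E F G : Type*} {mΩ : MeasurableSpace Ω} {mΩ' : MeasurableSpace Ω'}
  {mE : MeasurableSpace E} {mF : MeasurableSpace F} {mG : MeasurableSpace G}

lemma comp_map_eq_comap_comp (κ : Kernel Ω' E) {f : Ω → Ω'} (hf : Measurable f) (P : Measure Ω) :
    κ ∘ₘ P.map f = κ.comap f hf ∘ₘ P := by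
  rw [← Measure.deterministic_comp_eq_map hf, Measure.comp_assoc,
    Kernel.comp_deterministic_eq_comap]

lemma parallelComp_comap_prodMk (κ : Kernel Ω' E) (η : Kernel Ω' F) [IsSFiniteKernel κ]
    [IsSFiniteKernel η] {f g : Ω → Ω'} (hf : Measurable f) (hg : Measurable g) :
    (κ ∥ₖ η).comap (fun ω => (f ω, g ω)) (hf.prodMk hg) = κ.comap f hf ×ₖ η.comap g hg := by
  ext ω : 1
  rw [Kernel.comap_apply, Kernel.parallelComp_apply, Kernel.prod_apply, Kernel.comap_apply,
    Kernel.comap_apply]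

variable (P : Measure Ω) (κ : Kernel Ω E) (η : Kernel Ω F) (ξ : Kernel Ω G)

lemma map_fst_prod_comp [IsSFiniteKernel κ] [IsMarkovKernel η] :
    ((κ ×ₖ η) ∘ₘ P).map Prod.fst = κ ∘ₘ P := by
  rw [Measure.map_comp _ _ measurable_fst, ← Kernel.fst_eq, Kernel.fst_prod]

lemma map_snd_prod_comp [IsMarkovKernel κ] [IsSFiniteKernel η] :
    ((κ ×ₖ η) ∘ₘ P).map Prod.snd = η ∘ₘ P := by
  rw [Measure.map_comp _ _ measurable_snd, ← Kernel.snd_eq, Kernel.snd_prod]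

lemma map_swap_prod_comp [IsSFiniteKernel κ] [IsSFiniteKernel η] :
    ((κ ×ₖ η) ∘ₘ P).map Prod.swap = (η ×ₖ κ) ∘ₘ P := by
  rw [Measure.map_comp _ _ measurable_swap, Kernel.map_prod_swap]

lemma prod_comp_mem_Coupling [IsProbabilityMeasure P] [IsMarkovKernel κ] [IsMarkovKernel η] :
    (κ ×ₖ η) ∘ₘ P ∈ Coupling (κ ∘ₘ P) (η ∘ₘ P) :=
  ⟨inferInstance, map_fst_prod_comp P κ η, map_snd_prod_comp P κ η⟩

lemma map_fst_fst_prod_prod_comp [IsSFiniteKernel κ] [IsSFiniteKernel η] [IsMarkovKernel ξ] :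
    ((κ ×ₖ (η ×ₖ ξ)) ∘ₘ P).map (fun p => (p.1, p.2.1)) = (κ ×ₖ η) ∘ₘ P := by
  have hmap := Kernel.map_prod_map κ (η ×ₖ ξ) measurable_id measurable_fst
  rw [Kernel.map_id, ← Kernel.fst_eq, Kernel.fst_prod] at hmap
  rw [hmap, Measure.map_comp _ _ (by fun_prop)]
  rfl

lemma map_fst_snd_prod_prod_comp [IsSFiniteKernel κ] [IsMarkovKernel η] [IsSFiniteKernel ξ] :
    ((κ ×ₖ (η ×ₖ ξ)) ∘ₘ P).map (fun p => (p.1, p.2.2)) = (κ ×ₖ ξ) ∘ₘ P := by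
  have hmap := Kernel.map_prod_map κ (η ×ₖ ξ) measurable_id measurable_snd
  rw [Kernel.map_id, ← Kernel.snd_eq, Kernel.snd_prod] at hmap
  rw [hmap, Measure.map_comp _ _ (by fun_prop)]
  rfl

end KernelMixture

lemma sqrt_tCost_prod_comp_triangle {Ω E : Type*} {mΩ : MeasurableSpace Ω}
    [NormedAddCommGroup E] [MeasurableSpace E] [BorelSpace E] [SecondCountableTopology E]
    (P : Measure Ω) (κ₁ κ₂ κ₃ : Kernel Ω E)
    [IsMarkovKernel κ₁] [IsMarkovKernel κ₂] [IsMarkovKernel κ₃]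
    (h₁ : κ₁ ∘ₘ P ∈ (P2 : Set (Measure E))) (h₂ : κ₂ ∘ₘ P ∈ (P2 : Set (Measure E))) :
    √(tCost ((κ₁ ×ₖ κ₃) ∘ₘ P)) ≤
      √(tCost ((κ₁ ×ₖ κ₂) ∘ₘ P)) + √(tCost ((κ₂ ×ₖ κ₃) ∘ₘ P)) := by
  set T := (κ₁ ×ₖ (κ₂ ×ₖ κ₃)) ∘ₘ P
  have hT₁ : T.map (fun p => p.1) = κ₁ ∘ₘ P := map_fst_prod_comp P κ₁ (κ₂ ×ₖ κ₃)
  have hT₂₃ : T.map (fun p => (p.2.1, p.2.2)) = (κ₂ ×ₖ κ₃) ∘ₘ P :=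
    map_snd_prod_comp P κ₁ (κ₂ ×ₖ κ₃)
  have hT₂ : T.map (fun p => p.2.1) = κ₂ ∘ₘ P := by
    rw [← map_fst_prod_comp P κ₂ κ₃, ← hT₂₃, Measure.map_map measurable_fst (by fun_prop)]
    rfl
  rw [← map_fst_fst_prod_prod_comp P κ₁ κ₂ κ₃, ← map_fst_snd_prod_prod_comp P κ₁ κ₂ κ₃, ← hT₂₃]
  exact sqrt_tCost_map_prodMk_triangle
    (memLp_two_of_map_mem_P2 (by fun_prop) (hT₁ ▸ h₁))
    (memLp_two_of_map_mem_P2 (by fun_prop) (hT₂ ▸ h₂)) (by fun_prop)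

section LiftedCost

variable {d : ℕ} (θ : Euc d) (μ μ₁ μ₂ μ₃ : Measure (Euc d))

instance isFiniteMeasure_slicePair [IsFiniteMeasure μ] : IsFiniteMeasure (slicePair θ μ) :=
  Measure.isFiniteMeasure_map μ _

lemma fst_slicePair : (slicePair θ μ).fst = projLine θ μ :=
  Measure.fst_map_prodMk measurable_id

lemma snd_slicePair : (slicePair θ μ).snd = μ :=
  (Measure.snd_map_prodMk (by fun_prop)).trans Measure.map_id

variable [IsProbabilityMeasure μ] [IsProbabilityMeasure μ₁] [IsProbabilityMeasure μ₂]
  [IsProbabilityMeasure μ₃]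

instance isProbabilityMeasure_projLine : IsProbabilityMeasure (projLine θ μ) :=
  Measure.isProbabilityMeasure_map (by fun_prop)

/-- The disintegration of `μ` along `P_θ`, with the slices indexed by the quantile level
`t ∈ [0, 1]` of `P_θ#μ` instead of their position on the line. All measures are thereby
disintegrated over the same law `uniformUnit`. -/
def sliceKernel : Kernel ℝ (Euc d) :=
  (slicePair θ μ).condKernel.comap (quantile (projLine θ μ)) (measurable_quantile _)

instance isMarkovKernel_sliceKernel : IsMarkovKernel (sliceKernel θ μ) := by
  unfold sliceKernel
  infer_instance

lemma sliceKernel_comp_uniformUnit : sliceKernel θ μ ∘ₘ uniformUnit = μ := by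
  rw [sliceKernel, ← comp_map_eq_comap_comp, map_quantile_uniformUnit, ← fst_slicePair,
    ← Measure.snd_compProd, Measure.disintegrate, snd_slicePair]

lemma liftedPlan_eq_prod_sliceKernel_comp :
    liftedPlan θ μ₁ μ₂ = (sliceKernel θ μ₁ ×ₖ sliceKernel θ μ₂) ∘ₘ uniformUnit := by
  have hparallel : (fun st : ℝ × ℝ =>
      ((slicePair θ μ₁).condKernel st.1).prod ((slicePair θ μ₂).condKernel st.2)) =
      (slicePair θ μ₁).condKernel ∥ₖ (slicePair θ μ₂).condKernel :=
    funext fun st => (Kernel.parallelComp_apply _ _ st).symm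
  rw [liftedPlan, hparallel, piTheta, comp_map_eq_comap_comp _ (by fun_prop),
    parallelComp_comap_prodMk _ _ (by fun_prop) (by fun_prop)]
  rfl

lemma liftedPlan_mem_Coupling : liftedPlan θ μ₁ μ₂ ∈ Coupling μ₁ μ₂ := by
  simpa only [liftedPlan_eq_prod_sliceKernel_comp, sliceKernel_comp_uniformUnit] using
    prod_comp_mem_Coupling uniformUnit (sliceKernel θ μ₁) (sliceKernel θ μ₂)

lemma LS_eq_sqrt_tCost : LS θ μ₁ μ₂ = √(tCost (liftedPlan θ μ₁ μ₂)) := rfl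

lemma LS_comm : LS θ μ₁ μ₂ = LS θ μ₂ μ₁ := by
  rw [LS_eq_sqrt_tCost, LS_eq_sqrt_tCost, liftedPlan_eq_prod_sliceKernel_comp,
    liftedPlan_eq_prod_sliceKernel_comp, ← map_swap_prod_comp, tCost_map_swap]

lemma W2_le_LS : W2 μ₁ μ₂ ≤ LS θ μ₁ μ₂ :=
  W2_le_sqrt_tCost (liftedPlan_mem_Coupling θ μ₁ μ₂)

variable {μ₁ μ₂}

lemma LS_triangle (h₁ : μ₁ ∈ (P2 : Set (Measure (Euc d))))
    (h₂ : μ₂ ∈ (P2 : Set (Measure (Euc d)))) :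
    LS θ μ₁ μ₃ ≤ LS θ μ₁ μ₂ + LS θ μ₂ μ₃ := by
  simp only [LS_eq_sqrt_tCost, liftedPlan_eq_prod_sliceKernel_comp]
  apply sqrt_tCost_prod_comp_triangle <;> rwa [sliceKernel_comp_uniformUnit]

lemma eq_of_LS_eq_zero (h₁ : μ₁ ∈ (P2 : Set (Measure (Euc d))))
    (h₂ : μ₂ ∈ (P2 : Set (Measure (Euc d)))) (h : LS θ μ₁ μ₂ = 0) : μ₁ = μ₂ :=
  eq_of_sqrt_tCost_eq_zero h₁ h₂ (liftedPlan_mem_Coupling θ μ₁ μ₂) h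

end LiftedCost

theorem LS_almost_distance_general {d : ℕ} (θ : Euc d) (μ1 μ2 μ3 : Measure (Euc d))
    [IsFiniteMeasure μ1] [IsFiniteMeasure μ2] [IsFiniteMeasure μ3]
    (h1 : μ1 ∈ (P2 : Set (Measure (Euc d)))) (h2 : μ2 ∈ (P2 : Set (Measure (Euc d))))
    (h3 : μ3 ∈ (P2 : Set (Measure (Euc d)))) :
    0 ≤ LS θ μ1 μ2 ∧
    LS θ μ1 μ2 = LS θ μ2 μ1 ∧
    LS θ μ1 μ3 ≤ LS θ μ1 μ2 + LS θ μ2 μ3 ∧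
    W2 μ1 μ2 ≤ LS θ μ1 μ2 ∧
    (LS θ μ1 μ2 = 0 → μ1 = μ2) := by
  have := h1.1
  have := h2.1
  have := h3.1
  exact ⟨Real.sqrt_nonneg _, LS_comm θ μ1 μ2, LS_triangle θ μ3 h1 h2, W2_le_LS θ μ1 μ2,
    eq_of_LS_eq_zero θ h1 h2⟩

/-- the lifted cost `LS_θ` is non-negative, symmetric, satisfies the
triangle inequality, dominates `W₂`, and vanishes only between equal measures. -/
theorem LS_almost_distance {d : ℕ} (θ : Euc d) (hθ : ‖θ‖ = 1)
    (μ1 μ2 μ3 : Measure (Euc d))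
    [IsFiniteMeasure μ1] [IsFiniteMeasure μ2] [IsFiniteMeasure μ3]
    (h1 : μ1 ∈ (P2 : Set (Measure (Euc d)))) (h2 : μ2 ∈ (P2 : Set (Measure (Euc d))))
    (h3 : μ3 ∈ (P2 : Set (Measure (Euc d)))) :
    0 ≤ LS θ μ1 μ2 ∧
    LS θ μ1 μ2 = LS θ μ2 μ1 ∧
    LS θ μ1 μ3 ≤ LS θ μ1 μ2 + LS θ μ2 μ3 ∧
    W2 μ1 μ2 ≤ LS θ μ1 μ2 ∧
    (LS θ μ1 μ2 = 0 → μ1 = μ2) :=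
  LS_almost_distance_general θ μ1 μ2 μ3 h1 h2 h3

end
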